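/- The monodromy matrix M = R₂₁·R ∈ Q⊗Q (where R₂₁ denotes the tensor flip of R) equals the explicit sum M = (1/4)·Σ_{m,n∈{0,1}} Σ_{r,s∈{0,1,2,3}} (β²/i)^{rs + m(r+s+1)} · (2i)^{m+n} · i^{−m² − ms + 2ns − 2nr − rs + mr} · (F^m E^n K^s) ⊗ (E^m F^n K^r). -/

import Mathlib

open TensorProduct

set_option maxHeartbeats 1000000
set_option synthInstance.maxHeartbeats 400000

noncomputable section

/-- Generators of the restricted quantum group `Q = \bar U_i sl(2)`. -/
inductive QGen : Type
  | E | F | K | Kinv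
deriving DecidableEq

/-- The free algebra on the generators. -/
abbrev FA : Type := FreeAlgebra ℂ QGen

def ιE : FA := FreeAlgebra.ι ℂ QGen.E
def ιF : FA := FreeAlgebra.ι ℂ QGen.F
def ιK : FA := FreeAlgebra.ι ℂ QGen.K
def ιKi : FA := FreeAlgebra.ι ℂ QGen.Kinv

/-- Defining relations of `\bar U_i sl(2)` (at `q = i`, i.e. `p = 2`). -/
inductive QRel : FA → FA → Prop
  | KKi : QRel (ιK * ιKi) 1
  | KiK : QRel (ιKi * ιK) 1
  | KEKi : QRel (ιK * ιE * ιKi) (-ιE)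
  | KFKi : QRel (ιK * ιF * ιKi) (-ιF)
  | EF : QRel (ιE * ιF - ιF * ιE) ((2 * Complex.I)⁻¹ • (ιK - ιKi))
  | Esq : QRel (ιE ^ 2) 0
  | Fsq : QRel (ιF ^ 2) 0
  | K4 : QRel (ιK ^ 4) 1

/-- The restricted quantum group `\bar U_i sl(2)`: the quotient of the free algebra
by the two-sided ideal generated by the defining relations. -/
abbrev Q : Type := RingQuot QRel

def gE : Q := RingQuot.mkAlgHom ℂ QRel ιE
def gF : Q := RingQuot.mkAlgHom ℂ QRel ιF
def gK : Q := RingQuot.mkAlgHom ℂ QRel ιK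
def gKi : Q := RingQuot.mkAlgHom ℂ QRel ιKi

section Gadgets

variable (k : Type) [Field k] (A : Type) [Ring A] [Algebra k A]

abbrev TP2 : Type := A ⊗[k] A
abbrev TP3 : Type := A ⊗[k] (A ⊗[k] A)
abbrev TP4 : Type := A ⊗[k] (A ⊗[k] (A ⊗[k] A))

/-- Multiplication `a ⊗ b ↦ a * b`. -/
def mulA : TP2 k A →ₗ[k] A := LinearMap.mul' k A

/-- Tensor flip `a ⊗ b ↦ b ⊗ a`. -/
def flipA : TP2 k A →ₗ[k] TP2 k A := (TensorProduct.comm k A A).toLinearMap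

/-- `a ↦ a ⊗ 1`. -/
def lTen : A →ₗ[k] TP2 k A := (TensorProduct.mk k A A).flip 1

/-- `a ↦ 1 ⊗ a`. -/
def rTen : A →ₗ[k] TP2 k A := TensorProduct.mk k A A 1

/-- `a ⊗ b ↦ a ⊗ b ⊗ 1`. -/
def emb12 : TP2 k A →ₗ[k] TP3 k A := TensorProduct.map LinearMap.id (lTen k A)

/-- `a ⊗ b ↦ a ⊗ 1 ⊗ b`. -/
def emb13 : TP2 k A →ₗ[k] TP3 k A := TensorProduct.map LinearMap.id (rTen k A)

/-- `a ⊗ b ↦ 1 ⊗ a ⊗ b`. -/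
def emb23 : TP2 k A →ₗ[k] TP3 k A := TensorProduct.mk k A (TP2 k A) 1

/-- `a ⊗ b ⊗ c ↦ a ⊗ c ⊗ b`. -/
def perm132 : TP3 k A →ₗ[k] TP3 k A := TensorProduct.map LinearMap.id (flipA k A)

/-- `a ⊗ b ⊗ c ↦ b ⊗ c ⊗ a`. -/
def perm231 : TP3 k A →ₗ[k] TP3 k A :=
  (TensorProduct.assoc k A A A).toLinearMap ∘ₗ (TensorProduct.comm k A (TP2 k A)).toLinearMap

/-- `a ⊗ b ⊗ c ↦ c ⊗ a ⊗ b`. -/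
def perm312 : TP3 k A →ₗ[k] TP3 k A :=
  (TensorProduct.comm k (TP2 k A) A).toLinearMap ∘ₗ (TensorProduct.assoc k A A A).symm.toLinearMap

/-- `a ⊗ b ⊗ c ↦ b ⊗ a ⊗ c`. -/
def perm213 : TP3 k A →ₗ[k] TP3 k A :=
  (TensorProduct.assoc k A A A).toLinearMap ∘ₗ
    (TensorProduct.map (flipA k A) LinearMap.id) ∘ₗ (TensorProduct.assoc k A A A).symm.toLinearMap

variable {k A}

/-- `(Δ ⊗ id)` on two tensor factors, landing in the triple tensor product. -/
def copL (D : A →ₐ[k] TP2 k A) : TP2 k A →ₗ[k] TP3 k A :=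
  (TensorProduct.assoc k A A A).toLinearMap ∘ₗ TensorProduct.map D.toLinearMap LinearMap.id

/-- `(id ⊗ Δ)` on two tensor factors. -/
def copR (D : A →ₐ[k] TP2 k A) : TP2 k A →ₗ[k] TP3 k A :=
  TensorProduct.map LinearMap.id D.toLinearMap

/-- `(ε ⊗ id) : A ⊗ A → A`. -/
def cuL (ce : A →ₐ[k] k) : TP2 k A →ₗ[k] A :=
  (TensorProduct.lid k A).toLinearMap ∘ₗ TensorProduct.map ce.toLinearMap LinearMap.id

/-- `(id ⊗ ε) : A ⊗ A → A`. -/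
def cuR (ce : A →ₐ[k] k) : TP2 k A →ₗ[k] A :=
  (TensorProduct.rid k A).toLinearMap ∘ₗ TensorProduct.map LinearMap.id ce.toLinearMap

/-- `(id ⊗ ε ⊗ id) : A ⊗ A ⊗ A → A ⊗ A`. -/
def cuMid (ce : A →ₐ[k] k) : TP3 k A →ₗ[k] TP2 k A :=
  TensorProduct.map LinearMap.id (cuL ce)

/-- `(Δ ⊗ id ⊗ id)`. -/
def cop4_1 (D : A →ₐ[k] TP2 k A) : TP3 k A →ₗ[k] TP4 k A :=
  (TensorProduct.assoc k A A (TP2 k A)).toLinearMap ∘ₗ TensorProduct.map D.toLinearMap LinearMap.id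

/-- `(id ⊗ Δ ⊗ id)`. -/
def cop4_2 (D : A →ₐ[k] TP2 k A) : TP3 k A →ₗ[k] TP4 k A :=
  TensorProduct.map LinearMap.id (copL D)

/-- `(id ⊗ id ⊗ Δ)`. -/
def cop4_3 (D : A →ₐ[k] TP2 k A) : TP3 k A →ₗ[k] TP4 k A :=
  TensorProduct.map LinearMap.id (copR D)

/-- `a ⊗ b ⊗ c ↦ a ⊗ b ⊗ c ⊗ 1`, i.e. `Φ ↦ Φ ⊗ 1`. -/
def pad4 : TP3 k A →ₗ[k] TP4 k A :=
  TensorProduct.map LinearMap.id (TensorProduct.map LinearMap.id (lTen k A))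

/-- `a ⊗ b ⊗ c ↦ f(a) * g(b) * h(c)`. -/
def tmap3 (f g h : A →ₗ[k] A) : TP3 k A →ₗ[k] A :=
  mulA k A ∘ₗ TensorProduct.map f (mulA k A ∘ₗ TensorProduct.map g h)

/-- `a ⊗ b ↦ S(a) * b`, used in the antipode axiom `m ∘ (S ⊗ id) ∘ Δ = 1·ε`. -/
def antipL (s : A →ₗ[k] A) : TP2 k A →ₗ[k] A := mulA k A ∘ₗ TensorProduct.map s LinearMap.id

/-- `a ⊗ b ↦ a * S(b)`. -/
def antipR (s : A →ₗ[k] A) : TP2 k A →ₗ[k] A := mulA k A ∘ₗ TensorProduct.map LinearMap.id s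

end Gadgets

/-- Central idempotent `e₀ = (1 + K²)/2`. -/
def e0 : Q := (2:ℂ)⁻¹ • (1 + gK ^ 2)

/-- Central idempotent `e₁ = (1 − K²)/2`. -/
def e1 : Q := (2:ℂ)⁻¹ • (1 - gK ^ 2)

/-- `f⁺ = −i F`. -/
def fp : Q := (-Complex.I) • gF

/-- `f⁻ = E K⁻¹`. -/
def fm : Q := gE * gKi

/-- The Casimir element `C = FE − (i/4)(K − K⁻¹)`. -/
def Cas : Q := gF * gE - (Complex.I / 4) • (gK - gKi)

def t2 (a b : Q) : TP2 ℂ Q := a ⊗ₜ[ℂ] b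

def t3 (a b c : Q) : TP3 ℂ Q := a ⊗ₜ[ℂ] (b ⊗ₜ[ℂ] c)

def eEF : Q := gE * gF
def eEK : Q := gE * gK
def eFK : Q := gF * gK
def eEFK : Q := gE * gF * gK

/-- `Φ^{010}` component of the coassociator. -/
def Phi010 : TP3 ℂ Q :=
  t3 1 1 1 - (1 + Complex.I) • t3 gE gK gF + (1 - Complex.I) • t3 eFK gK eEK
    + (2:ℂ) • t3 eEFK 1 eEFK

/-- `Φ^{101}` component of the coassociator. -/
def Phi101 : TP3 ℂ Q :=
  (Complex.I - 1) • t3 1 gF eEK + t3 1 gK 1 + (2:ℂ) • t3 1 eEF eEFK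
    - (1 + Complex.I) • t3 1 eEK gF - (1 + Complex.I) • t3 gE eFK 1
    + (2 * Complex.I) • t3 gE eEFK gF + (1 - Complex.I) • t3 eFK gE 1
    - (2 * Complex.I) • t3 eFK eEFK eEK - (2:ℂ) • t3 eEFK eEF 1

/-- `Φ^{111}` component of the coassociator. -/
def Phi111 (β : ℂ) : TP3 ℂ Q :=
  (Complex.I * β ^ 2) • (
    (1 + Complex.I) • t3 1 gF eEK - t3 1 gK 1 - (2:ℂ) • t3 1 eEF 1
      - (2 * Complex.I) • t3 1 eEF eEFK + (1 + Complex.I) • t3 1 eEK gF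
      - (1 + Complex.I) • t3 gE 1 gF + (1 + Complex.I) • t3 gE eFK 1
      + (2 * Complex.I) • t3 gE eFK eEFK + (2:ℂ) • t3 gE eEFK gF
      - (1 + Complex.I) • t3 eFK 1 eEK + (1 + Complex.I) • t3 eFK gE 1
      + (2 * Complex.I) • t3 eFK gE eEFK + (2:ℂ) • t3 eFK eEFK eEK
      + (2 * Complex.I) • t3 eEFK gF eEK + (2 * Complex.I) • t3 eEFK gK eEFK
      - (2 * Complex.I) • t3 eEFK eEF 1 + (2 * Complex.I) • t3 eEFK eEK gF
      + (4:ℂ) • t3 eEFK eEF eEFK)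

/-- The coassociator `Φ` of the quasi-Hopf algebra structure on `Q`. -/
def Phi (β : ℂ) : TP3 ℂ Q :=
  t3 e0 e0 e0 + t3 e1 e0 e0 + Phi010 * t3 e0 e1 e0 + t3 e0 e0 e1
    + t3 e1 e1 e0 + Phi101 * t3 e1 e0 e1 + t3 e0 e1 e1 + Phi111 β * t3 e1 e1 e1

def R00 : TP2 ℂ Q :=
  (2:ℂ)⁻¹ • ((t2 1 1 + t2 1 gK + t2 gK 1 - t2 gK gK) * (t2 1 1 + (2 * Complex.I) • t2 gE gF))

def R01 : TP2 ℂ Q :=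
  (2:ℂ)⁻¹ • ((t2 1 1 - Complex.I • t2 1 gK + t2 gK 1 + Complex.I • t2 gK gK) *
    (t2 1 1 + (1 - Complex.I) • t2 eFK eEK - (1 - Complex.I) • t2 gE gF
      + (1 + Complex.I) • t2 eEFK 1 + (2 * Complex.I) • t2 eEFK eEFK))

def R10 : TP2 ℂ Q :=
  (2:ℂ)⁻¹ • ((t2 1 1 + t2 1 gK - Complex.I • t2 gK 1 + Complex.I • t2 gK gK) *
    (t2 1 gK + (1 - Complex.I) • t2 eFK gE + (1 - Complex.I) • t2 gE eFK
      - (1 - Complex.I) • t2 1 eEF - (2 * Complex.I) • t2 eEFK eEF))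

def R11 (β : ℂ) : TP2 ℂ Q :=
  (β / 2) • ((t2 1 1 - Complex.I • t2 1 gK - Complex.I • t2 gK 1 + t2 gK gK) *
    ((-Complex.I) • t2 gK 1 + (2 * Complex.I) • t2 eEK gF + (1 - Complex.I) • t2 gK eEFK
      - (1 + Complex.I) • t2 eEF 1 - (2 * Complex.I) • t2 eEF eEFK))

/-- The universal R-matrix `R` of the quasi-triangular quasi-Hopf structure on `Q`. -/
def Rmat (β : ℂ) : TP2 ℂ Q :=
  R00 * t2 e0 e0 + R01 * t2 e0 e1 + R10 * t2 e1 e0 + R11 β * t2 e1 e1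

/-- The standard R-matrix `R_st` of the quotient `Q/(K²-1)`. -/
def Rst : TP2 ℂ Q :=
  (2:ℂ)⁻¹ • ∑ m ∈ Finset.range 2, ∑ n ∈ Finset.range 2,
    ((-1:ℂ) ^ (m * n)) • (t2 (gK ^ m) (gK ^ n) * (t2 1 1 + (2 * Complex.I) • t2 gE gF))

/-- The monodromy matrix `M = R₂₁ · R`. -/
def Mmat (β : ℂ) : TP2 ℂ Q := flipA ℂ Q (Rmat β) * Rmat β

/-- The ribbon element `v = (e₀ − iβ K e₁)(1 − 2 f⁺ f⁻)`. -/
def vRib (β : ℂ) : Q := (e0 - (Complex.I * β) • (gK * e1)) * (1 - (2:ℂ) • (fp * fm))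

/-- The coevaluation element `β = e₀ − 2iβ² C e₁`. -/
def bbEl (β : ℂ) : Q := e0 - (2 * Complex.I * β ^ 2) • (Cas * e1)

/-- `b ⊗ c ↦ S(b · bb · S(c))`, inner part of the Drinfeld element. -/
def uInner (S : Q →ₗ[ℂ] Q) (bb : Q) : TP2 ℂ Q →ₗ[ℂ] Q :=
  S ∘ₗ mulA ℂ Q ∘ₗ TensorProduct.map (LinearMap.mulRight ℂ bb) S

/-- `Φ' ⊗ Φ'' ⊗ Φ''' ↦ S(Φ'' · bb · S(Φ''')) ⊗ Φ'`. -/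
def uMap1 (S : Q →ₗ[ℂ] Q) (bb : Q) : TP3 ℂ Q →ₗ[ℂ] TP2 ℂ Q :=
  TensorProduct.map (uInner S bb) LinearMap.id ∘ₗ (TensorProduct.comm ℂ Q (TP2 ℂ Q)).toLinearMap

/-- `R' ⊗ R'' ↦ S(R'') · al · R'`. -/
def uMap2 (S : Q →ₗ[ℂ] Q) (al : Q) : TP2 ℂ Q →ₗ[ℂ] Q :=
  mulA ℂ Q ∘ₗ TensorProduct.map (LinearMap.mulRight ℂ al ∘ₗ S) LinearMap.id ∘ₗ
    (TensorProduct.comm ℂ Q Q).toLinearMap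

/-- `(x ⊗ a) ⊗ (R' ⊗ R'') ↦ x · (S(R'') · al · R') · a`. -/
def uBig (S : Q →ₗ[ℂ] Q) (al : Q) : TP2 ℂ Q ⊗[ℂ] TP2 ℂ Q →ₗ[ℂ] Q :=
  mulA ℂ Q ∘ₗ TensorProduct.map LinearMap.id (mulA ℂ Q ∘ₗ (TensorProduct.comm ℂ Q Q).toLinearMap)
    ∘ₗ (TensorProduct.assoc ℂ Q Q Q).toLinearMap ∘ₗ TensorProduct.map LinearMap.id (uMap2 S al)

/-- The Drinfeld element `u = Σ S(Φ''·b·S(Φ'''))·S(R'')·α·R'·Φ'` (with `α = 1`). -/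
def uDrin (β : ℂ) (S : Q →ₗ[ℂ] Q) : Q :=
  uBig S 1 (uMap1 S (bbEl β) (Phi β) ⊗ₜ[ℂ] Rmat β)

/-- The balancing element `g = b · S(α) · v⁻¹ · u` (with `α = 1`). -/
def balG (β : ℂ) (S : Q →ₗ[ℂ] Q) : Q :=
  bbEl β * S 1 * Ring.inverse (vRib β) * uDrin β S

/-- The cointegral `c = (β²/i)·E·F·(1 + K + K² + K³)`. -/
def cInt (β : ℂ) : Q := (β ^ 2 / Complex.I) • (gE * gF * (1 + gK + gK ^ 2 + gK ^ 3))

/-- The q-trace of a one-dimensional representation, with balancing element `K⁻¹`. -/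
def qTr1 (ρ : Q →ₐ[ℂ] ℂ) : Q →ₗ[ℂ] ℂ := ρ.toLinearMap ∘ₗ LinearMap.mulLeft ℂ gK

/-- The q-trace of a two-dimensional (matrix) representation, with balancing element `K⁻¹`. -/
def qTrM (ρ : Q →ₐ[ℂ] Matrix (Fin 2) (Fin 2) ℂ) : Q →ₗ[ℂ] ℂ :=
  Matrix.traceLinearMap (Fin 2) ℂ ℂ ∘ₗ ρ.toLinearMap ∘ₗ LinearMap.mulLeft ℂ gK

/-- The Drinfeld mapping `φ ↦ (φ ⊗ id)(M)`. -/
def drinfeldImg (β : ℂ) (φ : Q →ₗ[ℂ] ℂ) : Q :=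
  (TensorProduct.lid ℂ Q) (TensorProduct.map φ LinearMap.id (Mmat β))

/-! ### Eliminating subtraction -/

theorem Q_neg (x : Q) : -x = (-1:ℂ) • x := (neg_one_smul ℂ x).symm
theorem Q_sub (x y : Q) : x - y = x + (-1:ℂ) • y := by
  have : x - y = x + -y := sub_eq_add_neg x y
  rw [this, Q_neg]
theorem T_neg (x : TP2 ℂ Q) : -x = (-1:ℂ) • x := (neg_one_smul ℂ x).symm
theorem T_sub (x y : TP2 ℂ Q) : x - y = x + (-1:ℂ) • y := by
  have : x - y = x + -y := sub_eq_add_neg x y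
  rw [this, T_neg]
theorem FA_neg (x : FA) : -x = (-1:ℂ) • x := (neg_one_smul ℂ x).symm
theorem FA_sub (x y : FA) : x - y = x + (-1:ℂ) • y := by
  have : x - y = x + -y := sub_eq_add_neg x y
  rw [this, FA_neg]

/-! ### Relations in `Q` -/

theorem rel_KiK : gKi * gK = 1 := by
  have := RingQuot.mkAlgHom_rel ℂ QRel.KiK
  rw [map_mul, map_one] at this
  exact this

theorem rel_KE : gK * gE = (-1:ℂ) • (gE * gK) := by
  have h1 : gK * gE * gKi = (-1:ℂ) • gE := by
    have := RingQuot.mkAlgHom_rel ℂ QRel.KEKi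
    rw [FA_neg, map_smul, map_mul, map_mul] at this
    exact this
  calc gK * gE = gK * gE * (gKi * gK) := by rw [rel_KiK, mul_one]
    _ = (gK * gE * gKi) * gK := by simp only [mul_assoc]
    _ = _ := by rw [h1, smul_mul_assoc]

theorem rel_KF : gK * gF = (-1:ℂ) • (gF * gK) := by
  have h1 : gK * gF * gKi = (-1:ℂ) • gF := by
    have := RingQuot.mkAlgHom_rel ℂ QRel.KFKi
    rw [FA_neg, map_smul, map_mul, map_mul] at this
    exact this
  calc gK * gF = gK * gF * (gKi * gK) := by rw [rel_KiK, mul_one]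
    _ = (gK * gF * gKi) * gK := by simp only [mul_assoc]
    _ = _ := by rw [h1, smul_mul_assoc]

theorem rel_EE : gE * gE = 0 := by
  have := RingQuot.mkAlgHom_rel ℂ QRel.Esq
  rw [pow_two, map_mul, map_zero] at this
  exact this

theorem rel_FF : gF * gF = 0 := by
  have := RingQuot.mkAlgHom_rel ℂ QRel.Fsq
  rw [pow_two, map_mul, map_zero] at this
  exact this

theorem rel_K4 : gK * gK * (gK * gK) = 1 := by
  have := RingQuot.mkAlgHom_rel ℂ QRel.K4
  rw [show 4 = 2 + 2 from rfl, pow_add, pow_two, map_mul, map_mul, map_one] at this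
  exact this

theorem rel_Ki : gKi = gK * (gK * gK) := by
  calc gKi = gKi * (gK * gK * (gK * gK)) := by rw [rel_K4, mul_one]
    _ = (gKi * gK) * (gK * (gK * gK)) := by simp only [mul_assoc]
    _ = _ := by rw [rel_KiK, one_mul]

theorem rel_FE : gF * gE = gE * gF + (Complex.I / 2) • (gK + (-1:ℂ) • (gK * (gK * gK))) := by
  have := RingQuot.mkAlgHom_rel ℂ QRel.EF
  rw [FA_sub, FA_sub, map_add, map_smul, map_mul, map_mul, map_smul, map_add, map_smul] at this
  have h : gE * gF + (-1:ℂ) • (gF * gE) = (2 * Complex.I)⁻¹ • (gK + (-1:ℂ) • gKi) := this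
  rw [rel_Ki] at h
  have h3 : ((2 * Complex.I)⁻¹ : ℂ) = -(Complex.I / 2) := by
    rw [mul_inv, Complex.inv_I]; ring
  rw [h3] at h
  have : gF * gE = gE * gF + (-1:ℂ) • (gE * gF + (-1:ℂ) • (gF * gE)) := by module
  rw [this, h]; module

/-! ### The blocks -/

/-- The idempotent of a block. -/
def eb : Bool → Q
  | false => e0
  | true => e1

def sg : Bool → ℂ
  | false => 1
  | true => -1

theorem eb_def (ε : Bool) : eb ε = (2:ℂ)⁻¹ • (1 + sg ε • (gK * gK)) := by
  cases ε
  · simp only [eb, e0, sg, pow_two, one_smul]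
  · simp only [eb, e1, sg, pow_two, Q_sub]

theorem sg_sq (ε : Bool) : sg ε * sg ε = 1 := by cases ε <;> simp [sg]

theorem KK_eb (ε : Bool) : gK * (gK * eb ε) = sg ε • eb ε := by
  have h := rel_K4
  rw [mul_assoc] at h
  simp only [eb_def, mul_smul_comm, mul_add, mul_one, h, smul_add, smul_smul]
  have : sg ε * (2⁻¹ * sg ε) = 2⁻¹ := by rw [mul_left_comm, sg_sq, mul_one]
  rw [this]; module

theorem eb_K (ε : Bool) : eb ε * gK = gK * eb ε := by
  simp only [eb_def, smul_mul_assoc, mul_smul_comm, add_mul, mul_add, mul_assoc, one_mul, mul_one]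

theorem KKE : gK * (gK * gE) = gE * (gK * gK) := by
  rw [rel_KE, mul_smul_comm, ← mul_assoc, rel_KE, smul_mul_assoc, smul_smul, mul_assoc]; norm_num

theorem KKF : gK * (gK * gF) = gF * (gK * gK) := by
  rw [rel_KF, mul_smul_comm, ← mul_assoc, rel_KF, smul_mul_assoc, smul_smul, mul_assoc]; norm_num

theorem eb_E (ε : Bool) : eb ε * gE = gE * eb ε := by
  simp only [eb_def, smul_mul_assoc, mul_smul_comm, add_mul, mul_add, mul_assoc, one_mul, mul_one,
    KKE]

theorem eb_F (ε : Bool) : eb ε * gF = gF * eb ε := by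
  simp only [eb_def, smul_mul_assoc, mul_smul_comm, add_mul, mul_add, mul_assoc, one_mul, mul_one,
    KKF]

theorem eb_mul (ε δ : Bool) : eb ε * eb δ = if ε = δ then eb ε else 0 := by
  have h' : gK * gK * eb δ = sg δ • eb δ := by rw [mul_assoc, KK_eb]
  rw [eb_def ε, smul_mul_assoc, add_mul, one_mul, smul_mul_assoc, h', ← eb_def]
  cases ε <;> cases δ <;> simp only [sg, if_true, reduceCtorEq, if_false] <;> module

theorem eb_sum : eb false + eb true = 1 := by
  simp only [eb_def, sg]
  module

/-! ### Gaussian integers and monomials -/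

structure GI where
  re : ℤ
  im : ℤ
deriving DecidableEq

namespace GI
def toC (g : GI) : ℂ := (g.re : ℂ) + (g.im : ℂ) * Complex.I
def mul (a b : GI) : GI := ⟨a.re * b.re - a.im * b.im, a.re * b.im + a.im * b.re⟩
def add (a b : GI) : GI := ⟨a.re + b.re, a.im + b.im⟩
def pw (a : GI) : ℕ → GI
  | 0 => ⟨1, 0⟩
  | n + 1 => mul (pw a n) a

theorem toC_mul (a b : GI) : (mul a b).toC = a.toC * b.toC := by
  simp only [toC, mul]; push_cast
  linear_combination (-(a.im : ℂ) * b.im) * Complex.I_sq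

theorem toC_add (a b : GI) : (add a b).toC = a.toC + b.toC := by
  simp only [toC, add]; push_cast; ring

theorem toC_pw (a : GI) (n : ℕ) : (pw a n).toC = a.toC ^ n := by
  induction n with
  | zero => simp [pw, toC]
  | succ n ih => rw [pw, toC_mul, ih, pow_succ]
end GI

/-- The monomial `E^a F^b K^c`. -/
structure Mon where
  a : Bool
  b : Bool
  c : Bool
deriving DecidableEq

def bp (x : Q) : Bool → Q
  | false => 1
  | true => x

def mon (m : Mon) : Q := bp gE m.a * (bp gF m.b * bp gK m.c)

def sgn : Bool → GI
  | false => ⟨1, 0⟩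
  | true => ⟨-1, 0⟩

/-- `K^c · K^c'` in the block `ε`. -/
def kk (ε c c' : Bool) : GI := sgn (ε && c && c')

/-- Multiplication of monomials in the block `ε`. -/
def monMul (ε : Bool) (m n : Mon) : List (GI × Mon) :=
  let s := GI.mul (sgn (m.c && (n.a ^^ n.b))) (kk ε m.c n.c)
  let main : List (GI × Mon) :=
    if (m.a && n.a) || (m.b && n.b) then [] else
      [(s, ⟨m.a || n.a, m.b || n.b, m.c ^^ n.c⟩)]
  let corr : List (GI × Mon) :=
    if ε && m.b && n.a then
      [(GI.mul (GI.mul s (sgn (m.c ^^ n.c))) (GI.mul ⟨0, 1⟩ (sgn n.b)),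
        ⟨m.a, n.b, !(m.c ^^ n.c)⟩)]
    else []
  main ++ corr

def ev1 (L : List (GI × Mon)) : Q := (L.map fun x => x.1.toC • mon x.2).sum

theorem ev1_nil : ev1 [] = 0 := rfl
theorem ev1_cons (x : GI × Mon) (L) : ev1 (x :: L) = x.1.toC • mon x.2 + ev1 L := by
  simp [ev1]

theorem KE' (x : Q) : gK * (gE * x) = (-1:ℂ) • (gE * (gK * x)) := by
  rw [← mul_assoc, rel_KE, smul_mul_assoc, mul_assoc]
theorem KF' (x : Q) : gK * (gF * x) = (-1:ℂ) • (gF * (gK * x)) := by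
  rw [← mul_assoc, rel_KF, smul_mul_assoc, mul_assoc]
theorem EE' (x : Q) : gE * (gE * x) = 0 := by
  rw [← mul_assoc, rel_EE, zero_mul]
theorem FF' (x : Q) : gF * (gF * x) = 0 := by
  rw [← mul_assoc, rel_FF, zero_mul]
theorem FE' (x : Q) : gF * (gE * x) =
    gE * (gF * x) + (Complex.I / 2) • (gK * x + (-1:ℂ) • (gK * (gK * (gK * x)))) := by
  rw [← mul_assoc, rel_FE, add_mul, smul_mul_assoc, add_mul, smul_mul_assoc]; simp only [mul_assoc]

theorem monMul_spec (ε : Bool) (m n : Mon) :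
    mon m * mon n * eb ε = ev1 (monMul ε m n) * eb ε := by
  obtain ⟨a, b, c⟩ := m
  obtain ⟨a', b', c'⟩ := n
  cases ε <;> cases a <;> cases b <;> cases c <;> cases a' <;> cases b' <;> cases c' <;>
  simp [mon, bp, monMul, kk, sgn, GI.mul, ev1, GI.toC, mul_assoc, KE', KF', EE', FF', FE', KK_eb,
    sg, smul_smul, mul_add, add_mul, smul_add, -neg_smul] <;> module

theorem mon_eb (ε : Bool) (m : Mon) : eb ε * mon m = mon m * eb ε := by
  obtain ⟨a, b, c⟩ := m
  have hE : Commute (eb ε) gE := eb_E ε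
  have hF : Commute (eb ε) gF := eb_F ε
  have hK : Commute (eb ε) gK := eb_K ε
  have h1 : Commute (eb ε) (1 : Q) := Commute.one_right _
  have hh : Commute (eb ε) (mon ⟨a, b, c⟩) := by
    refine Commute.mul_right ?_ (Commute.mul_right ?_ ?_)
    · cases a <;> assumption
    · cases b <;> assumption
    · cases c <;> assumption
  exact hh

/-! ### The tensor square -/

theorem t2_mul (a b c d : Q) : t2 a b * t2 c d = t2 (a * c) (b * d) :=
  Algebra.TensorProduct.tmul_mul_tmul a c b d

theorem t2_add_left (a b c : Q) : t2 (a + b) c = t2 a c + t2 b c := TensorProduct.add_tmul a b c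
theorem t2_add_right (a b c : Q) : t2 a (b + c) = t2 a b + t2 a c := TensorProduct.tmul_add a b c
theorem t2_smul_left (r : ℂ) (a b : Q) : t2 (r • a) b = r • t2 a b :=
  (TensorProduct.smul_tmul' r a b).symm
theorem t2_smul_right (r : ℂ) (a b : Q) : t2 a (r • b) = r • t2 a b :=
  TensorProduct.tmul_smul r a b
theorem t2_zero_left (b : Q) : t2 0 b = 0 := TensorProduct.zero_tmul _ b
theorem t2_zero_right (b : Q) : t2 b 0 = 0 := TensorProduct.tmul_zero _ b
theorem t2_one : t2 1 1 = 1 := rfl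

theorem flip_t2 (a b : Q) : flipA ℂ Q (t2 a b) = t2 b a := rfl
theorem flip_mul (x y : TP2 ℂ Q) : flipA ℂ Q (x * y) = flipA ℂ Q x * flipA ℂ Q y :=
  map_mul (Algebra.TensorProduct.comm ℂ Q Q) x y

/-- The idempotent of a block of the tensor square. -/
def te (ε δ : Bool) : TP2 ℂ Q := t2 (eb ε) (eb δ)

theorem te_sum : te false false + te false true + te true false + te true true = 1 := by
  have : te false false + te false true + te true false + te true true
      = t2 (eb false + eb true) (eb false + eb true) := by
    simp only [te, t2_add_left, t2_add_right]
    ac_rfl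
  rw [this, eb_sum, t2_one]

theorem te_mul (ε δ ε' δ' : Bool) :
    te ε δ * te ε' δ' = if ε = ε' ∧ δ = δ' then te ε δ else 0 := by
  rw [te, te, t2_mul, eb_mul, eb_mul]
  by_cases h : ε = ε' <;> by_cases h' : δ = δ' <;> simp [h, h', t2_zero_left, t2_zero_right]

theorem flip_te (ε δ : Bool) : flipA ℂ Q (te ε δ) = te δ ε := rfl

/-- Formal linear combinations of tensor products of monomials. -/
abbrev TL := List (GI × Mon × Mon)

def evt (x : GI × Mon × Mon) : TP2 ℂ Q := x.1.toC • t2 (mon x.2.1) (mon x.2.2)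

def ev (L : TL) : TP2 ℂ Q := (L.map evt).sum

theorem ev_nil : ev [] = 0 := rfl
theorem ev_cons (x) (L : TL) : ev (x :: L) = evt x + ev L := by simp [ev]
theorem ev_append (L L' : TL) : ev (L ++ L') = ev L + ev L' := by
  simp [ev]

def scale (g : GI) (L : TL) : TL := L.map fun x => (GI.mul g x.1, x.2)

theorem ev_scale (g : GI) (L : TL) : ev (scale g L) = g.toC • ev L := by
  induction L with
  | nil => simp [scale, ev_nil]
  | cons x L ih =>
    have : scale g (x :: L) = (GI.mul g x.1, x.2) :: scale g L := rfl
    rw [this, ev_cons, ev_cons, ih, smul_add, evt, evt, GI.toC_mul, smul_smul]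

theorem ev_comm_te (ε δ : Bool) (L : TL) : te ε δ * ev L = ev L * te ε δ := by
  induction L with
  | nil => rw [ev_nil, mul_zero, zero_mul]
  | cons x L ih =>
    rw [ev_cons, mul_add, add_mul, ih]
    congr 1
    rw [evt, mul_smul_comm, smul_mul_assoc, te, t2_mul, t2_mul, mon_eb, mon_eb]

/-- Product of two terms. -/
def mulTm (ε δ : Bool) (x y : GI × Mon × Mon) : TL :=
  (monMul ε x.2.1 y.2.1).flatMap fun u =>
    (monMul δ x.2.2 y.2.2).map fun v =>
      (GI.mul (GI.mul x.1 y.1) (GI.mul u.1 v.1), u.2, v.2)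

theorem ev_inner (g : GI) (u : GI × Mon) (W : List (GI × Mon)) :
    ev (W.map fun v => (GI.mul g (GI.mul u.1 v.1), u.2, v.2))
      = g.toC • t2 (u.1.toC • mon u.2) (ev1 W) := by
  induction W with
  | nil => simp [ev_nil, ev1_nil, t2_zero_right]
  | cons v W ih =>
    rw [List.map_cons, ev_cons, ih, ev1_cons, t2_add_right, smul_add]
    congr 1
    rw [evt, GI.toC_mul, GI.toC_mul, t2_smul_left, t2_smul_right, smul_smul, smul_smul]
    ring_nf

theorem ev_outer (g : GI) (V W : List (GI × Mon)) :
    ev (V.flatMap fun u => W.map fun v => (GI.mul g (GI.mul u.1 v.1), u.2, v.2))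
      = g.toC • t2 (ev1 V) (ev1 W) := by
  induction V with
  | nil => simp [ev_nil, ev1_nil, t2_zero_left]
  | cons u V ih =>
    rw [List.flatMap_cons, ev_append, ih, ev_inner, ev1_cons, t2_add_left, smul_add]

theorem mulTm_spec (ε δ : Bool) (x y : GI × Mon × Mon) :
    evt x * evt y * te ε δ = ev (mulTm ε δ x y) * te ε δ := by
  rw [mulTm, ev_outer, GI.toC_mul, evt, evt, te, smul_mul_assoc, mul_smul_comm, smul_smul,
    smul_mul_assoc, smul_mul_assoc, t2_mul, t2_mul, t2_mul, monMul_spec, monMul_spec]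

def mulL (ε δ : Bool) (L L' : TL) : TL :=
  L.flatMap fun x => L'.flatMap fun y => mulTm ε δ x y

theorem mulL_spec (ε δ : Bool) (L L' : TL) :
    ev L * ev L' * te ε δ = ev (mulL ε δ L L') * te ε δ := by
  induction L with
  | nil => simp [mulL, ev_nil]
  | cons x L ih =>
    have h : mulL ε δ (x :: L) L' = (L'.flatMap fun y => mulTm ε δ x y) ++ mulL ε δ L L' := rfl
    rw [h, ev_append, add_mul, ← ih, ev_cons, add_mul, add_mul]
    congr 1
    clear h ih
    induction L' with
    | nil => simp [ev_nil]
    | cons y L' ih =>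
      rw [List.flatMap_cons, ev_append, add_mul, ← ih, ← mulTm_spec, ev_cons, mul_add, add_mul]

/-! ### Equality of formal combinations -/

def bq : Bool → Bool → Bool
  | true, b => b
  | false, b => !b

def mq (m n : Mon) : Bool :=
  match m, n with
  | ⟨a, b, c⟩, ⟨a', b', c'⟩ => bq a a' && (bq b b' && bq c c')

theorem mq_iff (m n : Mon) : mq m n = true ↔ m = n := by
  obtain ⟨a, b, c⟩ := m
  obtain ⟨a', b', c'⟩ := n
  cases a <;> cases b <;> cases c <;> cases a' <;> cases b' <;> cases c' <;> simp [mq, bq]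

def pq (x p : Mon × Mon) : Bool := mq x.1 p.1 && mq x.2 p.2

theorem pq_iff (x p : Mon × Mon) : pq x p = true ↔ x = p := by
  simp [pq, mq_iff, Prod.ext_iff]

def coef (L : TL) (p : Mon × Mon) : GI :=
  match L with
  | [] => ⟨0, 0⟩
  | x :: L => match pq x.2 p with
    | true => GI.add x.1 (coef L p)
    | false => coef L p

def allMon : List Mon :=
  [⟨false, false, false⟩, ⟨false, false, true⟩, ⟨false, true, false⟩, ⟨false, true, true⟩,
   ⟨true, false, false⟩, ⟨true, false, true⟩, ⟨true, true, false⟩, ⟨true, true, true⟩]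

def allPairs : List (Mon × Mon) := allMon.flatMap fun m => allMon.map fun n => (m, n)

theorem mem_allMon (m : Mon) : m ∈ allMon := by
  obtain ⟨a, b, c⟩ := m
  cases a <;> cases b <;> cases c <;> simp [allMon]

theorem mem_allPairs (p : Mon × Mon) : p ∈ allPairs := by
  simp only [allPairs, List.mem_flatMap, List.mem_map]
  exact ⟨p.1, mem_allMon _, p.2, mem_allMon _, rfl⟩

theorem ev_eq_sum (L : TL) :
    ev L = ∑ p ∈ allPairs.toFinset, (coef L p).toC • t2 (mon p.1) (mon p.2) := by
  induction L with
  | nil => simp [ev_nil, coef, GI.toC]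
  | cons x L ih =>
    have h : ∀ p, (coef (x :: L) p).toC • t2 (mon p.1) (mon p.2)
        = (if x.2 = p then x.1.toC • t2 (mon p.1) (mon p.2) else 0)
          + (coef L p).toC • t2 (mon p.1) (mon p.2) := by
      intro p
      by_cases hp : x.2 = p
      · have hq := (pq_iff _ _).2 hp
        simp only [coef, hq, if_pos hp, GI.toC_add, add_smul]
      · have hq : pq x.2 p = false := by
          rw [← Bool.not_eq_true, pq_iff]; exact hp
        simp only [coef, hq, if_neg hp, zero_add]
    rw [ev_cons, ih, Finset.sum_congr rfl fun p _ => h p, Finset.sum_add_distrib,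
      Finset.sum_ite_eq, if_pos (List.mem_toFinset.2 (mem_allPairs _))]
    rfl

/-- The terms with left factor `m`. -/
def part (m : Mon) : TL → TL
  | [] => []
  | x :: L => match mq x.2.1 m with
    | true => x :: part m L
    | false => part m L

theorem coef_part (L : TL) (m n : Mon) : coef (part m L) (m, n) = coef L (m, n) := by
  induction L with
  | nil => rfl
  | cons x L ih =>
    cases h : mq x.2.1 m
    · simp only [part, coef, pq, h, Bool.false_and, ih]
    · simp only [part, coef, pq, h, Bool.true_and, ih]

def checkRow (m : Mon) (L L' : TL) : Bool :=
  allMon.all fun n => decide (coef L (m, n) = coef L' (m, n))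

def check (L L' : TL) : Bool := allMon.all fun m => checkRow m (part m L) (part m L')

theorem ev_eq_of_check {L L' : TL} (h : check L L' = true) : ev L = ev L' := by
  rw [ev_eq_sum, ev_eq_sum]
  refine Finset.sum_congr rfl fun p _ => ?_
  have h1 := List.all_eq_true.1 h p.1 (mem_allMon p.1)
  have h2 := of_decide_eq_true (List.all_eq_true.1 h1 p.2 (mem_allMon p.2))
  rw [coef_part, coef_part] at h2
  rw [h2]

/-! ### Reflected expressions -/

inductive Ex where
  | t (m n : Mon) : Ex
  | add (x y : Ex) : Ex
  | mul (x y : Ex) : Ex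
  | pow (x : Ex) (n : ℕ) : Ex
  | smul (g : GI) (x : Ex) : Ex
  | sum (n : ℕ) (f : ℕ → Ex) : Ex

namespace Ex

def den : Ex → TP2 ℂ Q
  | t m n => t2 (mon m) (mon n)
  | add x y => den x + den y
  | mul x y => den x * den y
  | pow x n => den x ^ n
  | smul g x => g.toC • den x
  | sum n f => ∑ i ∈ Finset.range n, den (f i)

def powL (ε δ : Bool) (L : TL) : ℕ → TL
  | 0 => [(⟨1, 0⟩, ⟨false, false, false⟩, ⟨false, false, false⟩)]
  | n + 1 => mulL ε δ (powL ε δ L n) L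

def sumL (f : ℕ → TL) : ℕ → TL
  | 0 => []
  | n + 1 => sumL f n ++ f n

def nf (ε δ : Bool) : Ex → TL
  | t m n => [(⟨1, 0⟩, m, n)]
  | add x y => nf ε δ x ++ nf ε δ y
  | mul x y => mulL ε δ (nf ε δ x) (nf ε δ y)
  | pow x n => powL ε δ (nf ε δ x) n
  | smul g x => scale g (nf ε δ x)
  | sum n f => sumL (fun i => nf ε δ (f i)) n

theorem rep_mul {ε δ : Bool} {x y : TP2 ℂ Q} {L L' : TL} (hx : x * te ε δ = ev L * te ε δ)
    (hy : y * te ε δ = ev L' * te ε δ) : x * y * te ε δ = ev (mulL ε δ L L') * te ε δ := by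
  rw [mul_assoc, hy, ← ev_comm_te, ← mul_assoc, hx, mul_assoc, ev_comm_te, ← mul_assoc, mulL_spec]

theorem nf_spec (ε δ : Bool) (x : Ex) : den x * te ε δ = ev (nf ε δ x) * te ε δ := by
  induction x with
  | t m n => simp [den, nf, ev, evt, GI.toC]
  | add x y hx hy => rw [den, nf, add_mul, hx, hy, ev_append, add_mul]
  | mul x y hx hy => exact rep_mul hx hy
  | pow x n hx =>
    rw [den, nf]
    induction n with
    | zero => simp [powL, ev, evt, GI.toC, mon, bp, t2_one]
    | succ n ih => rw [pow_succ, powL]; exact rep_mul ih hx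
  | smul g x hx => rw [den, nf, ev_scale, smul_mul_assoc, smul_mul_assoc, hx]
  | sum n f hf =>
    rw [den, nf]
    induction n with
    | zero => simp [sumL, ev_nil]
    | succ n ih => rw [Finset.sum_range_succ, add_mul, ih, hf, sumL, ev_append, add_mul]

def flip : Ex → Ex
  | t m n => t n m
  | add x y => add (flip x) (flip y)
  | mul x y => mul (flip x) (flip y)
  | pow x n => pow (flip x) n
  | smul g x => smul g (flip x)
  | sum n f => sum n fun i => flip (f i)

theorem flip_spec (x : Ex) : flipA ℂ Q (den x) = den (flip x) := by
  induction x with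
  | t m n => rfl
  | add x y hx hy => rw [den, flip, den, map_add, hx, hy]
  | mul x y hx hy => rw [den, flip, den, flip_mul, hx, hy]
  | pow x n hx =>
    rw [den, flip, den, ← hx]
    exact map_pow (Algebra.TensorProduct.comm ℂ Q Q) _ n
  | smul g x hx => rw [den, flip, den, map_smul, hx]
  | sum n f hf =>
    rw [den, flip, den, map_sum]
    exact Finset.sum_congr rfl fun i _ => hf i

end Ex

/-! ### The R-matrix -/

def m1 : Mon := ⟨false, false, false⟩
def mK : Mon := ⟨false, false, true⟩
def mF : Mon := ⟨false, true, false⟩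
def mFK : Mon := ⟨false, true, true⟩
def mE : Mon := ⟨true, false, false⟩
def mEK : Mon := ⟨true, false, true⟩
def mEF : Mon := ⟨true, true, false⟩
def mEFK : Mon := ⟨true, true, true⟩

theorem mon_m1 : mon m1 = 1 := by simp [mon, m1, bp]
theorem mon_mK : mon mK = gK := by simp [mon, mK, bp]
theorem mon_mF : mon mF = gF := by simp [mon, mF, bp]
theorem mon_mE : mon mE = gE := by simp [mon, mE, bp]
theorem mon_mFK : mon mFK = eFK := by simp [mon, mFK, bp, eFK]
theorem mon_mEK : mon mEK = eEK := by simp [mon, mEK, bp, eEK]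
theorem mon_mEF : mon mEF = eEF := by simp [mon, mEF, bp, eEF]
theorem mon_mEFK : mon mEFK = eEFK := by simp [mon, mEFK, bp, eEFK, mul_assoc]

open Ex in
/-- The β-free part of twice the block of the R-matrix. -/
def X : Bool → Bool → Ex
  | false, false => mul (add (add (add (t m1 m1) (t m1 mK)) (t mK m1)) (smul ⟨-1, 0⟩ (t mK mK)))
      (add (t m1 m1) (smul ⟨0, 2⟩ (t mE mF)))
  | false, true =>
    mul (add (add (add (t m1 m1) (smul ⟨0, -1⟩ (t m1 mK))) (t mK m1)) (smul ⟨0, 1⟩ (t mK mK)))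
      (add (add (add (add (t m1 m1) (smul ⟨1, -1⟩ (t mFK mEK))) (smul ⟨-1, 1⟩ (t mE mF)))
        (smul ⟨1, 1⟩ (t mEFK m1))) (smul ⟨0, 2⟩ (t mEFK mEFK)))
  | true, false =>
    mul (add (add (add (t m1 m1) (t m1 mK)) (smul ⟨0, -1⟩ (t mK m1))) (smul ⟨0, 1⟩ (t mK mK)))
      (add (add (add (add (t m1 mK) (smul ⟨1, -1⟩ (t mFK mE))) (smul ⟨1, -1⟩ (t mE mFK)))
        (smul ⟨-1, 1⟩ (t m1 mEF))) (smul ⟨0, -2⟩ (t mEFK mEF)))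
  | true, true =>
    mul (add (add (add (t m1 m1) (smul ⟨0, -1⟩ (t m1 mK))) (smul ⟨0, -1⟩ (t mK m1))) (t mK mK))
      (add (add (add (add (smul ⟨0, -1⟩ (t mK m1)) (smul ⟨0, 2⟩ (t mEK mF)))
        (smul ⟨1, -1⟩ (t mK mEFK))) (smul ⟨-1, -1⟩ (t mEF m1))) (smul ⟨0, -2⟩ (t mEF mEFK)))

/-- The block of the R-matrix. -/
def Rb (β : ℂ) : Bool → Bool → TP2 ℂ Q
  | false, false => R00
  | false, true => R01
  | true, false => R10
  | true, true => R11 β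

def cb (β : ℂ) (ε δ : Bool) : ℂ := if ε && δ then β else 1

theorem Rb_eq (β : ℂ) (ε δ : Bool) : Rb β ε δ = (cb β ε δ / 2) • (X ε δ).den := by
  have e1 : GI.toC ⟨-1, 0⟩ = -1 := by simp [GI.toC]
  have e2 : GI.toC ⟨0, 2⟩ = 2 * Complex.I := by simp [GI.toC]
  have e3 : GI.toC ⟨0, -1⟩ = (-1) * Complex.I := by simp [GI.toC]
  have e4 : GI.toC ⟨0, 1⟩ = Complex.I := by simp [GI.toC]
  have e5 : GI.toC ⟨1, -1⟩ = 1 - Complex.I := by simp [GI.toC]; ring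
  have e6 : GI.toC ⟨-1, 1⟩ = (-1) * (1 - Complex.I) := by simp [GI.toC]; ring
  have e7 : GI.toC ⟨1, 1⟩ = 1 + Complex.I := by simp [GI.toC]
  have e8 : GI.toC ⟨0, -2⟩ = (-1) * (2 * Complex.I) := by simp [GI.toC]
  have e9 : GI.toC ⟨-1, -1⟩ = (-1) * (1 + Complex.I) := by simp [GI.toC]; ring
  have e10 : -Complex.I = (-1) * Complex.I := by ring
  have e11 : (2⁻¹ : ℂ) = 1 / 2 := by norm_num
  cases ε <;> cases δ <;>
  simp only [Rb, R00, R01, R10, R11, X, Ex.den, mon_m1, mon_mK, mon_mF, mon_mE, mon_mFK, mon_mEK,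
    mon_mEF, mon_mEFK, T_sub, e1, e2, e3, e4, e5, e6, e7, e8, e9, e10, e11, smul_smul, cb,
    Bool.and_true, Bool.and_false, if_true, Bool.false_eq_true, if_false]

theorem Rmat_eq (β : ℂ) : Rmat β = Rb β false false * te false false + Rb β false true * te false true
    + Rb β true false * te true false + Rb β true true * te true true := rfl

theorem Rmat_te (β : ℂ) (ε δ : Bool) : Rmat β * te ε δ = Rb β ε δ * te ε δ := by
  rw [Rmat_eq]
  simp only [add_mul, mul_assoc, te_mul]
  cases ε <;> cases δ <;> simp only [reduceCtorEq, and_self, and_false, false_and, if_true, if_false, mul_zero, add_zero, zero_add]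

theorem flip_Rmat_te (β : ℂ) (ε δ : Bool) :
    flipA ℂ Q (Rmat β) * te ε δ = flipA ℂ Q (Rb β δ ε) * te ε δ := by
  have := congrArg (flipA ℂ Q) (Rmat_te β δ ε)
  rwa [flip_mul, flip_mul, flip_te] at this

theorem Rb_comm_te (β : ℂ) (ε δ : Bool) : te ε δ * (Rb β ε δ * te ε δ) = Rb β ε δ * te ε δ := by
  rw [Rb_eq, smul_mul_assoc, Ex.nf_spec, mul_smul_comm, ← mul_assoc, ev_comm_te, mul_assoc, te_mul]
  simp

theorem block_aux (f a r r' t : TP2 ℂ Q) (h1 : a * t = r * t) (h2 : t * (r * t) = r * t)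
    (h3 : f * t = r' * t) : f * a * t = r' * r * t := by
  rw [mul_assoc, h1, ← h2, ← mul_assoc, h3, mul_assoc, h2, mul_assoc]

theorem Mmat_def (β : ℂ) : Mmat β = flipA ℂ Q (Rmat β) * Rmat β := rfl

theorem Mmat_te' (β : ℂ) (ε δ : Bool) :
    Mmat β * te ε δ = flipA ℂ Q (Rb β δ ε) * Rb β ε δ * te ε δ := by
  rw [Mmat_def]
  exact block_aux _ _ _ _ _ (Rmat_te β ε δ) (Rb_comm_te β ε δ) (flip_Rmat_te β ε δ)

theorem eq_of_blocks (x y : TP2 ℂ Q) (h : ∀ ε δ, x * te ε δ = y * te ε δ) : x = y := by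
  calc x = x * (te false false + te false true + te true false + te true true) := by
        rw [te_sum, mul_one]
    _ = y * (te false false + te false true + te true false + te true true) := by
        simp only [mul_add, h]
    _ = _ := by rw [te_sum, mul_one]

theorem T_smul_mul (c : ℂ) (x y : TP2 ℂ Q) : (c • x) * y = c • (x * y) := smul_mul_assoc c x y

theorem half_smul_mul (c : ℂ) (x y : TP2 ℂ Q) :
    ((c / 2) • x) * ((c / 2) • y) = (4:ℂ)⁻¹ • ((c ^ 2) • (x * y)) := by
  rw [smul_mul_assoc, mul_smul_comm, smul_smul, smul_smul]
  have h4 : c / 2 * (c / 2) = (4:ℂ)⁻¹ * c ^ 2 := by ring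
  rw [h4]

theorem flip_smul (c : ℂ) (x : TP2 ℂ Q) : flipA ℂ Q (c • x) = c • flipA ℂ Q x := map_smul _ c x

theorem den_mul (x y : Ex) : (Ex.mul x y).den = x.den * y.den := rfl
theorem den_smul (g : GI) (x : Ex) : (Ex.smul g x).den = g.toC • x.den := rfl

theorem Mmat_te_aux (c : ℂ) (x y : Ex) (M a b t : TP2 ℂ Q) (h : M * t = flipA ℂ Q a * b * t)
    (ha : a = (c / 2) • x.den) (hb : b = (c / 2) • y.den) :
    M * t = (4:ℂ)⁻¹ • (((c ^ 2) • (Ex.mul x.flip y).den) * t) := by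
  rw [h, ha, hb, flip_smul, Ex.flip_spec, half_smul_mul, ← den_mul, T_smul_mul]

theorem Mmat_te (β : ℂ) (ε δ : Bool) :
    Mmat β * te ε δ = (4:ℂ)⁻¹ •
      (((cb β ε δ ^ 2) • (Ex.mul (X δ ε).flip (X ε δ)).den) * te ε δ) := by
  have hc : cb β δ ε = cb β ε δ := by simp only [cb, Bool.and_comm]
  have h := Rb_eq β δ ε
  rw [hc] at h
  exact Mmat_te_aux _ _ _ _ _ _ _ (Mmat_te' β ε δ) h (Rb_eq β ε δ)

/-! ### The right-hand side -/

def cg (σ : GI) (m n r s : ℕ) : GI :=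
  GI.mul (GI.mul (GI.pw σ (r * s + m * (r + s + 1))) (GI.pw ⟨0, 2⟩ (m + n)))
    (GI.pw ⟨0, 1⟩ ((-(m:ℤ) ^ 2 - (m:ℤ) * s + 2 * (n:ℤ) * s - 2 * (n:ℤ) * r
              - (r:ℤ) * s + (m:ℤ) * r) % 4).toNat)

open Ex in
def Y (σ : GI) : Ex :=
  sum 2 fun m => sum 2 fun n => sum 4 fun r => sum 4 fun s =>
    smul (cg σ m n r s) (mul (mul (pow (t mF mE) m) (pow (t mE mF) n))
      (mul (pow (t mK m1) s) (pow (t m1 mK) r)))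

theorem I_zpow_mod (z : ℤ) : Complex.I ^ z = Complex.I ^ (z % 4).toNat := by
  have h0 : 0 ≤ z % 4 := Int.emod_nonneg z (by norm_num)
  conv_lhs => rw [← Int.mul_ediv_add_emod z 4, zpow_add₀ Complex.I_ne_zero, zpow_mul]
  have : Complex.I ^ (4:ℤ) = 1 := by
    rw [show (4:ℤ) = ((4:ℕ):ℤ) from rfl, zpow_natCast, Complex.I_pow_four]
  rw [this, one_zpow, one_mul, ← zpow_natCast, Int.toNat_of_nonneg h0]

theorem t2_pow (a b : Q) (n : ℕ) : t2 a b ^ n = t2 (a ^ n) (b ^ n) := by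
  induction n with
  | zero => rw [pow_zero, pow_zero, pow_zero, t2_one]
  | succ n ih => rw [pow_succ, pow_succ, pow_succ, ih, t2_mul]

theorem Y_den (σ : GI) (b : ℂ) (hσ : σ.toC = b) : (Y σ).den =
      ∑ m ∈ Finset.range 2, ∑ n ∈ Finset.range 2,
        ∑ r ∈ Finset.range 4, ∑ s ∈ Finset.range 4,
          (b ^ (r * s + m * (r + s + 1)) *
            (2 * Complex.I) ^ (m + n) *
            Complex.I ^ (-(m:ℤ) ^ 2 - (m:ℤ) * s + 2 * (n:ℤ) * s - 2 * (n:ℤ) * r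
              - (r:ℤ) * s + (m:ℤ) * r)) •
          t2 (gF ^ m * gE ^ n * gK ^ s) (gE ^ m * gF ^ n * gK ^ r) := by
  have e2 : GI.toC ⟨0, 2⟩ = 2 * Complex.I := by simp [GI.toC]
  have e4 : GI.toC ⟨0, 1⟩ = Complex.I := by simp [GI.toC]
  simp only [Y, Ex.den, cg, GI.toC_mul, GI.toC_pw, hσ, e2, e4, ← I_zpow_mod, mon_m1, mon_mK,
    mon_mF, mon_mE, t2_pow, t2_mul, one_pow, mul_one, one_mul]

def cg2 (σ : GI) (ε δ : Bool) : GI := if ε && δ then GI.mul σ ⟨0, 1⟩ else ⟨1, 0⟩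

theorem check_one : ∀ ε δ : Bool, check
    (Ex.nf ε δ (Ex.smul (cg2 ⟨1, 0⟩ ε δ) (Ex.mul (X δ ε).flip (X ε δ))))
    (Ex.nf ε δ (Y ⟨1, 0⟩)) = true := by
  decide +kernel

theorem check_neg_one : ∀ ε δ : Bool, check
    (Ex.nf ε δ (Ex.smul (cg2 ⟨-1, 0⟩ ε δ) (Ex.mul (X δ ε).flip (X ε δ))))
    (Ex.nf ε δ (Y ⟨-1, 0⟩)) = true := by
  decide +kernel

theorem main_aux' (M x y t : TP2 ℂ Q) (c d : ℂ) (h : M * t = (4:ℂ)⁻¹ • ((c • x) * t)) (h1 : c = d)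
    (h2 : (d • x) * t = y * t) : M * t = ((4:ℂ)⁻¹ • y) * t := by
  rw [h, h1, h2, T_smul_mul]

theorem main_aux (β : ℂ) (σ : GI) (hσ : β ^ 2 = σ.toC * Complex.I)
    (hc : ∀ ε δ : Bool, check
      (Ex.nf ε δ (Ex.smul (cg2 σ ε δ) (Ex.mul (X δ ε).flip (X ε δ))))
      (Ex.nf ε δ (Y σ)) = true) : Mmat β = (4:ℂ)⁻¹ • (Y σ).den := by
  refine eq_of_blocks _ _ fun ε δ => ?_
  have h1 : cb β ε δ ^ 2 = (cg2 σ ε δ).toC := by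
    unfold cb cg2
    split_ifs
    · rw [hσ, GI.toC_mul]; simp [GI.toC]
    · simp [GI.toC]
  have h2 : (cg2 σ ε δ).toC • (Ex.mul (X δ ε).flip (X ε δ)).den * te ε δ
      = (Y σ).den * te ε δ := by
    rw [← den_smul, Ex.nf_spec, Ex.nf_spec, ev_eq_of_check (hc ε δ)]
  exact main_aux' _ _ _ _ _ _ (Mmat_te β ε δ) h1 h2

/-- the explicit formula for the monodromy matrix `M = R₂₁·R`. -/
theorem statement17 (β : ℂ) (hβ : β ^ 4 = -1) :
    Mmat β = (4:ℂ)⁻¹ •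
      ∑ m ∈ Finset.range 2, ∑ n ∈ Finset.range 2,
        ∑ r ∈ Finset.range 4, ∑ s ∈ Finset.range 4,
          ((β ^ 2 / Complex.I) ^ (r * s + m * (r + s + 1)) *
            (2 * Complex.I) ^ (m + n) *
            Complex.I ^ (-(m:ℤ) ^ 2 - (m:ℤ) * s + 2 * (n:ℤ) * s - 2 * (n:ℤ) * r
              - (r:ℤ) * s + (m:ℤ) * r)) •
          t2 (gF ^ m * gE ^ n * gK ^ s) (gE ^ m * gF ^ n * gK ^ r) := by
  have h : (β ^ 2 - Complex.I) * (β ^ 2 + Complex.I) = 0 := by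
    linear_combination hβ - Complex.I_sq
  rcases mul_eq_zero.1 h with h | h
  · have h1 : β ^ 2 = GI.toC ⟨1, 0⟩ * Complex.I := by
      simp [GI.toC]; linear_combination h
    rw [main_aux β _ h1 check_one, Y_den _ (β ^ 2 / Complex.I)]
    rw [h1, mul_div_assoc, div_self Complex.I_ne_zero, mul_one]
  · have h1 : β ^ 2 = GI.toC ⟨-1, 0⟩ * Complex.I := by
      simp [GI.toC]; linear_combination h
    rw [main_aux β _ h1 check_neg_one, Y_den _ (β ^ 2 / Complex.I)]
    rw [h1, mul_div_assoc, div_self Complex.I_ne_zero, mul_one]
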